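/- Watson's identities: G(q)G(q⁴)+qH(q)H(q⁴) = φ(q)/f(q²)² · f(q²), precisely G(q)G(q⁴)+qH(q)H(q⁴) = φ(q)/(q²;q²)_∞ and G(q)G(q⁴)−qH(q)H(q⁴) = φ(q⁵)/(q²;q²)_∞, where φ(q)=∑_{n∈ℤ}q^{n²}. -/

import Mathlib

/-- Rogers–Ramanujan series `G` in product form: `G(q) = 1/((q;q⁵)_∞ (q⁴;q⁵)_∞)`. -/
noncomputable def RRG (q : ℂ) : ℂ :=
  1 / ((∏' k : ℕ, (1 - q ^ (5 * k + 1))) * ∏' k : ℕ, (1 - q ^ (5 * k + 4)))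

/-- Rogers–Ramanujan series `H` in product form: `H(q) = 1/((q²;q⁵)_∞ (q³;q⁵)_∞)`. -/
noncomputable def RRH (q : ℂ) : ℂ :=
  1 / ((∏' k : ℕ, (1 - q ^ (5 * k + 2))) * ∏' k : ℕ, (1 - q ^ (5 * k + 3)))

/-- Ramanujan's theta function `φ(q) = ∑_{n ∈ ℤ} q^(n²)`. -/
noncomputable def rphi (q : ℂ) : ℂ := ∑' n : ℤ, q ^ (n ^ 2)

/-!
The Jacobi triple product turns all the infinite products involved into theta series. Splitting
`ℤ × ℤ` into the five cosets of a sublattice with orthogonal basis expands a product of two theta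
series of modulus `q` into five products of theta series of modulus `q ^ 5`. Applied to
`f(q, q ^ 3) f(-q ^ 2, -q ^ 2)` (in Ramanujan's notation), and compared with the dissections of the
theta series of `G(q)` and `H(q)` modulo 2, this gives the identity with the plus sign. Applied to
`φ(q) ^ 2` it gives `φ(q) ^ 2 - φ(q ^ 5) ^ 2 = 4 q f(q, q ^ 9) f(q ^ 3, q ^ 7)`, and the
right-hand side is `4 q G(q) G(q ^ 4) H(q) H(q ^ 4) (q ^ 2; q ^ 2)_∞ ^ 2`; hence the identity with
the minus sign holds up to sign, and the sign is constant on the disc and determined at `q = 0`.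
-/

open Filter Finset Topology

/-- The binomial coefficient `n choose 2`, extended to all integers `n`. -/
def chooseTwo (n : ℤ) : ℤ := n * (n - 1) / 2

lemma two_mul_chooseTwo (n : ℤ) : 2 * chooseTwo n = n * (n - 1) :=
  Int.mul_ediv_cancel' (Int.even_mul_pred_self n).two_dvd

lemma chooseTwo_add (m n : ℤ) : chooseTwo (m + n) = chooseTwo m + chooseTwo n + m * n := by
  linarith [two_mul_chooseTwo m, two_mul_chooseTwo n, two_mul_chooseTwo (m + n)]

lemma chooseTwo_mul (m n : ℤ) : chooseTwo (m * n) = m ^ 2 * chooseTwo n + chooseTwo m * n := by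
  refine mul_left_cancel₀ (two_ne_zero (α := ℤ)) ?_
  linear_combination two_mul_chooseTwo (m * n) - m ^ 2 * two_mul_chooseTwo n
    - n * two_mul_chooseTwo m

lemma chooseTwo_add_one (n : ℤ) : chooseTwo (n + 1) = chooseTwo n + n := by
  linarith [two_mul_chooseTwo n, two_mul_chooseTwo (n + 1)]

lemma chooseTwo_sub_one (n : ℤ) : chooseTwo (n - 1) = chooseTwo n - (n - 1) := by
  linarith [two_mul_chooseTwo n, two_mul_chooseTwo (n - 1)]

lemma chooseTwo_neg (n : ℤ) : chooseTwo (-n) = chooseTwo n + n := by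
  linarith [two_mul_chooseTwo n, two_mul_chooseTwo (-n)]

section NormedField

variable {𝕜 : Type*} [NormedField 𝕜] {a q x y : 𝕜}

lemma norm_pow_lt_one (hq : ‖q‖ < 1) {n : ℕ} (hn : n ≠ 0) : ‖q ^ n‖ < 1 := by
  rw [norm_pow]
  exact pow_lt_one₀ (norm_nonneg q) hq hn

lemma one_sub_ne_zero_of_norm_lt_one (ha : ‖a‖ < 1) : 1 - a ≠ 0 := by
  rintro h
  rw [← sub_eq_zero.mp h, norm_one] at ha
  exact ha.false

/-- The finite `q`-Pochhammer symbol `(a; q)_n`. -/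
def finQPochhammer (a q : 𝕜) (n : ℕ) : 𝕜 := ∏ k ∈ range n, (1 - a * q ^ k)

/-- The infinite `q`-Pochhammer symbol `(a; q)_∞`. -/
noncomputable def qPochhammer (a q : 𝕜) : 𝕜 := ∏' k : ℕ, (1 - a * q ^ k)

lemma qPochhammer_one (q : 𝕜) : qPochhammer 1 q = 0 :=
  tprod_of_exists_eq_zero ⟨0, by rw [pow_zero, mul_one, sub_self]⟩

lemma finQPochhammer_succ (a q : 𝕜) (n : ℕ) :
    finQPochhammer a q (n + 1) = finQPochhammer a q n * (1 - a * q ^ n) :=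
  prod_range_succ _ n

lemma finQPochhammer_mul (a q : 𝕜) (m n : ℕ) :
    finQPochhammer a q (m * n) = ∏ i ∈ range m, finQPochhammer (a * q ^ i) (q ^ m) n := by
  induction n with
  | zero => simp [finQPochhammer]
  | succ n ih =>
    simp only [finQPochhammer_succ, prod_mul_distrib, ← ih]
    rw [mul_add_one, finQPochhammer, prod_range_add]
    exact congrArg _ (prod_congr rfl fun i _ ↦ by ring)

lemma finQPochhammer_self_ne_zero (hq : ‖q‖ < 1) (n : ℕ) : finQPochhammer q q n ≠ 0 := by
  refine prod_ne_zero_iff.mpr fun k _ ↦ one_sub_ne_zero_of_norm_lt_one ?_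
  rw [← pow_succ']
  exact norm_pow_lt_one hq k.succ_ne_zero

lemma summable_norm_mul_pow (a : 𝕜) (hq : ‖q‖ < 1) : Summable fun k : ℕ ↦ ‖a * q ^ k‖ := by
  simpa only [norm_mul, norm_pow] using
    (summable_geometric_of_lt_one (norm_nonneg q) hq).mul_left ‖a‖

section Complete

variable [CompleteSpace 𝕜]

lemma multipliable_one_sub_mul_pow (a : 𝕜) (hq : ‖q‖ < 1) :
    Multipliable fun k : ℕ ↦ 1 - a * q ^ k := by
  simpa only [sub_eq_add_neg] using
    multipliable_one_add_of_summable (f := fun k ↦ -(a * q ^ k))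
      (by simpa only [norm_neg] using summable_norm_mul_pow a hq)

lemma tendsto_finQPochhammer (a : 𝕜) (hq : ‖q‖ < 1) :
    Tendsto (finQPochhammer a q) atTop (𝓝 (qPochhammer a q)) :=
  (multipliable_one_sub_mul_pow a hq).tendsto_prod_tprod_nat

lemma qPochhammer_ne_zero (ha : ‖a‖ < 1) (hq : ‖q‖ < 1) : qPochhammer a q ≠ 0 := by
  have factor_ne_zero (k : ℕ) : 1 + -(a * q ^ k) ≠ 0 := by
    rw [← sub_eq_add_neg]
    refine one_sub_ne_zero_of_norm_lt_one ?_
    rw [norm_mul, norm_pow]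
    exact mul_lt_one_of_nonneg_of_lt_one_left (norm_nonneg a) ha
      (pow_le_one₀ (norm_nonneg q) hq.le)
  simpa only [qPochhammer, sub_eq_add_neg] using
    tprod_one_add_ne_zero_of_summable factor_ne_zero
      (by simpa only [norm_neg] using summable_norm_mul_pow a hq)

lemma qPochhammer_eq_prod_range (a : 𝕜) (hq : ‖q‖ < 1) {m : ℕ} (hm : m ≠ 0) :
    qPochhammer a q = ∏ i ∈ range m, qPochhammer (a * q ^ i) (q ^ m) := by
  refine tendsto_nhds_unique
    ((tendsto_finQPochhammer a hq).comp (tendsto_id.const_mul_atTop' hm.bot_lt)) ?_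
  refine (tendsto_finsetProd _ fun i _ ↦ tendsto_finQPochhammer (a * q ^ i)
    (norm_pow_lt_one hq hm)).congr fun n ↦ ?_
  exact (finQPochhammer_mul a q m n).symm

lemma qPochhammer_eq_mul_sq (a : 𝕜) (hq : ‖q‖ < 1) :
    qPochhammer a q = qPochhammer a (q ^ 2) * qPochhammer (a * q) (q ^ 2) := by
  simp only [qPochhammer_eq_prod_range a hq two_ne_zero, prod_range_succ, prod_range_zero, one_mul,
    pow_zero, mul_one, pow_one]

lemma qPochhammer_mul_neg (a : 𝕜) (hq : ‖q‖ < 1) :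
    qPochhammer a q * qPochhammer (-a) q = qPochhammer (a ^ 2) (q ^ 2) := by
  rw [qPochhammer, qPochhammer, ← (multipliable_one_sub_mul_pow a hq).tprod_mul
    (multipliable_one_sub_mul_pow (-a) hq)]
  exact tprod_congr fun k ↦ by ring

end Complete

lemma continuousOn_qPochhammer [ProperSpace 𝕜] :
    ContinuousOn (fun p : 𝕜 × 𝕜 ↦ qPochhammer p.1 p.2) {p | ‖p.2‖ < 1} := by
  have locally_uniform : HasProdLocallyUniformlyOn
      (fun (k : ℕ) (p : 𝕜 × 𝕜) ↦ 1 + -(p.1 * p.2 ^ k))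
      (fun p ↦ ∏' k : ℕ, (1 + -(p.1 * p.2 ^ k))) {p | ‖p.2‖ < 1} := by
    refine hasProdLocallyUniformlyOn_of_forall_compact
      (isOpen_lt (by fun_prop) continuous_const) fun K hK hcK ↦ ?_
    rcases K.eq_empty_or_nonempty with rfl | hne
    · simpa [hasProdUniformlyOn_iff_tendstoUniformlyOn] using tendstoUniformlyOn_empty
    obtain ⟨p, -, hp⟩ := hcK.exists_isMaxOn hne (f := fun p ↦ ‖p.1‖) (by fun_prop)
    obtain ⟨r, hr, hr_max⟩ := hcK.exists_isMaxOn hne (f := fun p ↦ ‖p.2‖) (by fun_prop)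
    refine (summable_norm_mul_pow p.1 (hK hr)).hasProdUniformlyOn_nat_one_add hcK
      (.of_forall fun k s hs ↦ ?_) fun k ↦ by fun_prop
    rw [norm_neg, norm_mul, norm_mul, norm_pow, norm_pow]
    gcongr
    · exact hp hs
    · exact hr_max hs
  simpa only [qPochhammer, sub_eq_add_neg] using
    TendstoLocallyUniformlyOn.continuousOn locally_uniform
      (Frequently.of_forall fun s ↦ by fun_prop)

/-- Ramanujan's two-variable theta function `f(x, y)` with `x * y = q`, as a function of `x` and the
modulus `q`. -/
noncomputable def thetaSeries (x q : 𝕜) : 𝕜 := ∑' n : ℤ, q ^ chooseTwo n * x ^ n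

lemma thetaSeries_eq_of_mul_eq (hq0 : q ≠ 0) (hxy : x * y = q) :
    thetaSeries x q = thetaSeries y q := by
  subst hxy
  rw [thetaSeries, ← (Equiv.neg ℤ).tsum_eq]
  refine tsum_congr fun n ↦ ?_
  have hx : x ≠ 0 := left_ne_zero_of_mul hq0
  rw [Equiv.neg_apply, chooseTwo_neg, zpow_add₀ hq0, mul_zpow x y n, zpow_neg]
  field_simp

lemma thetaSeries_eq_mul (hq0 : q ≠ 0) (hx : x ≠ 0) :
    thetaSeries x q = x * thetaSeries (q * x) q := by
  rw [thetaSeries, ← (Equiv.addRight (1 : ℤ)).tsum_eq, thetaSeries, ← tsum_mul_left]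
  refine tsum_congr fun n ↦ ?_
  rw [Equiv.coe_addRight, chooseTwo_add_one, zpow_add₀ hq0, zpow_add_one₀ hx, mul_zpow]
  ring

lemma summable_norm_thetaSeries_nat (hq : ‖q‖ < 1) (hq0 : q ≠ 0) (hx : x ≠ 0) :
    Summable fun n : ℕ ↦ ‖q ^ chooseTwo n * x ^ (n : ℤ)‖ := by
  have ratio_tendsto : Tendsto (fun n : ℕ ↦ ‖q ^ n * x‖) atTop (𝓝 0) := by
    simpa using ((tendsto_pow_atTop_nhds_zero_of_norm_lt_one hq).mul_const x).norm
  refine summable_of_ratio_test_tendsto_lt_one zero_lt_one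
    (.of_forall fun n ↦ norm_ne_zero_iff.mpr (by positivity)) (ratio_tendsto.congr fun n ↦ ?_)
  rw [norm_norm, norm_norm, ← norm_div, Nat.cast_succ, chooseTwo_add_one, zpow_add₀ hq0,
    zpow_add_one₀ hx, zpow_natCast q]
  congr 1
  field_simp

lemma summable_norm_thetaSeries (hq : ‖q‖ < 1) (hq0 : q ≠ 0) (hx : x ≠ 0) :
    Summable fun n : ℤ ↦ ‖q ^ chooseTwo n * x ^ n‖ := by
  refine .of_nat_of_neg (summable_norm_thetaSeries_nat hq hq0 hx)
    ((summable_norm_thetaSeries_nat hq hq0 (div_ne_zero hq0 hx)).congr fun n ↦ ?_)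
  rw [chooseTwo_neg, zpow_add₀ hq0, div_zpow, zpow_neg]
  congr 1
  ring

/-- `1 / (q; q)_m` for an integer `m`, with the usual convention that it vanishes for `m < 0`. -/
noncomputable def invQFactorial (q : 𝕜) (m : ℤ) : 𝕜 :=
  if 0 ≤ m then (finQPochhammer q q m.toNat)⁻¹ else 0

lemma invQFactorial_natCast (q : 𝕜) (n : ℕ) :
    invQFactorial q n = (finQPochhammer q q n)⁻¹ := by
  simp [invQFactorial]

lemma invQFactorial_of_neg (q : 𝕜) {m : ℤ} (hm : m < 0) : invQFactorial q m = 0 :=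
  if_neg hm.not_ge

lemma invQFactorial_sub_one (hq : ‖q‖ < 1) (m : ℤ) :
    invQFactorial q (m - 1) = (1 - q ^ m) * invQFactorial q m := by
  rcases lt_trichotomy m 0 with hm | rfl | hm
  · rw [invQFactorial_of_neg q hm, invQFactorial_of_neg q (by lia), mul_zero]
  · rw [invQFactorial_of_neg q (by lia), zpow_zero, sub_self, zero_mul]
  · obtain ⟨n, rfl⟩ : ∃ n : ℕ, m = (n + 1 : ℕ) := ⟨(m - 1).toNat, by lia⟩
    have hn := finQPochhammer_self_ne_zero hq (n + 1)
    rw [show ((n + 1 : ℕ) : ℤ) - 1 = n by lia, invQFactorial_natCast, invQFactorial_natCast,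
      zpow_natCast]
    rw [finQPochhammer_succ, ← pow_succ'] at *
    field_simp [left_ne_zero_of_mul hn, right_ne_zero_of_mul hn]

/-- The central Gaussian binomial coefficient `[2n choose n + j]_q`, which is `0` for `n < |j|`. -/
noncomputable def centralQBinom (q : 𝕜) (n : ℕ) (j : ℤ) : 𝕜 :=
  finQPochhammer q q (2 * n) * invQFactorial q (n + j) * invQFactorial q (n - j)

lemma centralQBinom_zero (q : 𝕜) (j : ℤ) : centralQBinom q 0 j = if j = 0 then 1 else 0 := by
  rcases lt_trichotomy j 0 with hj | rfl | hj
  · simp [centralQBinom, invQFactorial_of_neg q hj, hj.ne]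
  · simp [centralQBinom, invQFactorial, finQPochhammer]
  · simp [centralQBinom, invQFactorial_of_neg q (neg_lt_zero.mpr hj), hj.ne']

-- Pascal's rule for Gaussian binomials, applied twice.
lemma centralQBinom_succ (hq : ‖q‖ < 1) (hq0 : q ≠ 0) (n : ℕ) (j : ℤ) :
    centralQBinom q (n + 1) j = (1 + q ^ (2 * n + 1)) * centralQBinom q n j
      + q ^ (n + 1 - j) * centralQBinom q n (j - 1)
      + q ^ (n + 1 + j) * centralQBinom q n (j + 1) := by
  obtain ⟨a, ha⟩ : ∃ a : ℤ, a = n + 1 + j := ⟨_, rfl⟩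
  obtain ⟨b, hb⟩ : ∃ b : ℤ, b = n + 1 - j := ⟨_, rfl⟩
  have pow_even : q ^ (2 * n + 2) = q ^ a * q ^ b := by
    rw [← zpow_add₀ hq0, ← zpow_natCast]
    congr 1
    lia
  have pow_odd : q ^ (2 * n + 1) = q ^ a * q ^ b / q := by
    rw [← pow_even, pow_succ q (2 * n + 1), mul_div_cancel_right₀ _ hq0]
  have factorial_succ : finQPochhammer q q (2 * (n + 1)) =
      finQPochhammer q q (2 * n) * (1 - q ^ (2 * n + 1)) * (1 - q ^ (2 * n + 2)) := by
    rw [mul_add_one, finQPochhammer_succ, finQPochhammer_succ, ← pow_succ', ← pow_succ']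
  simp only [centralQBinom, factorial_succ, pow_even, pow_odd, ← ha, ← hb]
  rw [show ((n + 1 : ℕ) : ℤ) + j = a by lia, show ((n + 1 : ℕ) : ℤ) - j = b by lia,
    show (n : ℤ) + j = a - 1 by lia, show (n : ℤ) - j = b - 1 by lia,
    show (n : ℤ) + (j - 1) = a - 1 - 1 by lia, show (n : ℤ) - (j - 1) = b by lia,
    show (n : ℤ) + (j + 1) = a by lia, show (n : ℤ) - (j + 1) = b - 1 - 1 by lia]
  simp only [invQFactorial_sub_one hq, zpow_sub_one₀ hq0]
  field_simp
  ring

/-- The finite form of the Jacobi triple product. -/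
lemma hasSum_centralQBinom_mul (hq : ‖q‖ < 1) (hq0 : q ≠ 0) (hx : x ≠ 0) (n : ℕ) :
    HasSum (fun j : ℤ ↦ centralQBinom q n j * (q ^ chooseTwo j * x ^ j))
      (finQPochhammer (-x) q n * finQPochhammer (-(q / x)) q n) := by
  induction n with
  | zero =>
    convert! hasSum_ite_eq (0 : ℤ) (1 : 𝕜) using 1
    · funext j
      rw [centralQBinom_zero]
      split_ifs with hj
      · simp [hj, chooseTwo]
      · rw [zero_mul]
    · simp [finQPochhammer]
  | succ n ih =>
    have sum_shift_down := ((Equiv.subRight (1 : ℤ)).hasSum_iff.mpr ih).mul_left (x * q ^ n)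
    have sum_shift_up := ((Equiv.addRight (1 : ℤ)).hasSum_iff.mpr ih).mul_left (q ^ (n + 1) / x)
    convert! ((ih.mul_left (1 + q ^ (2 * n + 1))).add sum_shift_down).add sum_shift_up using 1
    · funext j
      simp only [Function.comp_apply, Equiv.coe_addRight, Equiv.subRight_apply]
      rw [centralQBinom_succ hq hq0, chooseTwo_add_one, chooseTwo_sub_one, zpow_sub_one₀ hx,
        zpow_add_one₀ hx, zpow_add₀ hq0 _ j, zpow_sub₀ hq0 (chooseTwo j), zpow_sub_one₀ hq0,
        zpow_sub₀ hq0, zpow_add₀ hq0 _ j, zpow_add_one₀ hq0, zpow_natCast]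
      field_simp
      ring
    · rw [finQPochhammer_succ, finQPochhammer_succ]
      field_simp
      ring

section Complete

variable [CompleteSpace 𝕜]

lemma tendsto_invQFactorial_natCast_add (hq : ‖q‖ < 1) (j : ℤ) :
    Tendsto (fun n : ℕ ↦ invQFactorial q (n + j)) atTop (𝓝 (qPochhammer q q)⁻¹) := by
  have index_tendsto : Tendsto (fun n : ℕ ↦ ((n : ℤ) + j).toNat) atTop atTop :=
    tendsto_atTop.mpr fun b ↦ (eventually_ge_atTop (b + j.natAbs)).mono fun n hn ↦ by lia
  refine (((tendsto_finQPochhammer q hq).inv₀ (qPochhammer_ne_zero hq hq)).comp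
    index_tendsto).congr' ((eventually_ge_atTop j.natAbs).mono fun n hn ↦ ?_)
  exact (if_pos (by lia)).symm

lemma tendsto_centralQBinom (hq : ‖q‖ < 1) (j : ℤ) :
    Tendsto (fun n ↦ centralQBinom q n j) atTop (𝓝 (qPochhammer q q)⁻¹) := by
  have tendsto_even : Tendsto (fun n ↦ finQPochhammer q q (2 * n)) atTop
      (𝓝 (qPochhammer q q)) :=
    (tendsto_finQPochhammer q hq).comp (tendsto_id.const_mul_atTop' two_pos)
  simpa only [centralQBinom, mul_inv_cancel₀ (qPochhammer_ne_zero hq hq), one_mul,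
    ← sub_eq_add_neg] using (tendsto_even.mul (tendsto_invQFactorial_natCast_add hq j)).mul
      (tendsto_invQFactorial_natCast_add hq (-j))

lemma exists_forall_norm_centralQBinom_le (hq : ‖q‖ < 1) :
    ∃ C, ∀ n j, ‖centralQBinom q n j‖ ≤ C := by
  have tendsto_factorial := tendsto_finQPochhammer q hq
  obtain ⟨C₁, hC₁⟩ := tendsto_factorial.norm.bddAbove_range
  obtain ⟨C₂, hC₂⟩ := (tendsto_factorial.inv₀ (qPochhammer_ne_zero hq hq)).norm.bddAbove_range
  have factorial_le (n : ℕ) : ‖finQPochhammer q q n‖ ≤ C₁ := hC₁ ⟨n, rfl⟩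
  have hC₁_nonneg : 0 ≤ C₁ := (norm_nonneg _).trans (factorial_le 0)
  have hC₂_nonneg : 0 ≤ C₂ := (norm_nonneg _).trans (hC₂ ⟨0, rfl⟩)
  have invQFactorial_le (m : ℤ) : ‖invQFactorial q m‖ ≤ C₂ := by
    unfold invQFactorial
    split_ifs
    · exact hC₂ ⟨_, rfl⟩
    · rwa [norm_zero]
  refine ⟨C₁ * C₂ * C₂, fun n j ↦ ?_⟩
  rw [centralQBinom, norm_mul, norm_mul]
  gcongr
  exacts [factorial_le _, invQFactorial_le _, invQFactorial_le _]

/-- The **Jacobi triple product** identity. -/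
theorem thetaSeries_eq_qPochhammer (hq : ‖q‖ < 1) (hq0 : q ≠ 0) (hxy : x * y = q) :
    thetaSeries x q = qPochhammer q q * qPochhammer (-x) q * qPochhammer (-y) q := by
  have hx : x ≠ 0 := left_ne_zero_of_mul (hxy ▸ hq0)
  obtain rfl : y = q / x := eq_div_of_mul_eq hx (mul_comm y x ▸ hxy)
  obtain ⟨C, hC⟩ := exists_forall_norm_centralQBinom_le hq
  have tendsto_sum := tendsto_tsum_of_dominated_convergence
    ((summable_norm_thetaSeries hq hq0 hx).mul_left C)
    (fun j ↦ (tendsto_centralQBinom hq j).mul_const (q ^ chooseTwo j * x ^ j))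
    (.of_forall fun n j ↦ by
      rw [norm_mul]
      exact mul_le_mul_of_nonneg_right (hC n j) (norm_nonneg _))
  have tendsto_prod := (tendsto_finQPochhammer (-x) hq).mul (tendsto_finQPochhammer (-(q / x)) hq)
  have limits_eq := tendsto_nhds_unique tendsto_sum (tendsto_prod.congr fun n ↦
    (hasSum_centralQBinom_mul hq hq0 hx n).tsum_eq.symm)
  rw [tsum_mul_left, inv_mul_eq_iff_eq_mul₀ (qPochhammer_ne_zero hq hq)] at limits_eq
  rw [thetaSeries, limits_eq, mul_assoc]

lemma thetaSeries_eq_sum_range (hq : ‖q‖ < 1) (hq0 : q ≠ 0) (hx : x ≠ 0) (m : ℕ) [NeZero m] :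
    thetaSeries x q = ∑ r ∈ range m, q ^ chooseTwo r * x ^ r *
      thetaSeries (q ^ (chooseTwo m + m * r) * x ^ m) (q ^ m ^ 2) := by
  obtain ⟨e, e_apply⟩ : ∃ e : Fin m × ℤ ≃ ℤ, ∀ r n, e (r, n) = n * m + r :=
    ⟨(Equiv.prodComm _ _).trans (Int.divModEquiv m).symm, fun _ _ ↦ rfl⟩
  have summable_classes := e.summable_iff.mpr (summable_norm_thetaSeries hq hq0 hx).of_norm
  rw [thetaSeries, ← e.tsum_eq, sum_range]
  refine (summable_classes.tsum_prod.trans (tsum_fintype _)).trans ?_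
  refine sum_congr rfl fun r _ ↦ ?_
  rw [thetaSeries, ← tsum_mul_left]
  refine tsum_congr fun n ↦ ?_
  have exponent_eq : chooseTwo (n * m + r) =
      (m ^ 2 : ℕ) * chooseTwo n + (chooseTwo m + m * r) * n + chooseTwo r := by
    rw [chooseTwo_add, mul_comm n, chooseTwo_mul]
    push_cast
    ring
  rw [Function.comp_apply, e_apply, exponent_eq, zpow_add₀ hq0, zpow_add₀ hq0, zpow_add₀ hx,
    mul_comm n, mul_zpow, zpow_mul, zpow_mul, zpow_mul, zpow_natCast, zpow_natCast, zpow_natCast]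
  ring

lemma thetaSeries_eq_add (hq : ‖q‖ < 1) (hq0 : q ≠ 0) (hx : x ≠ 0) :
    thetaSeries x q =
      thetaSeries (q * x ^ 2) (q ^ 4) + x * thetaSeries (q ^ 3 * x ^ 2) (q ^ 4) := by
  have chooseTwo_zero : chooseTwo 0 = 0 := rfl
  have chooseTwo_one : chooseTwo 1 = 0 := rfl
  have chooseTwo_two : chooseTwo 2 = 1 := rfl
  rw [thetaSeries_eq_sum_range hq hq0 hx 2, sum_range_succ, sum_range_one]
  norm_num [chooseTwo_two, chooseTwo_zero, chooseTwo_one, zpow_ofNat]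

/-- The bijection `(r, n, k) ↦ (n + 2 k, k + r - 2 n)`, splitting `ℤ × ℤ` into the five cosets of a
sublattice with orthogonal basis. -/
def finFiveProdEquiv : Fin 5 × (ℤ × ℤ) ≃ ℤ × ℤ where
  toFun p := (p.2.1 + 2 * p.2.2, p.2.2 + (p.1 : ℕ) - 2 * p.2.1)
  invFun p := (⟨((p.2 + 2 * p.1) % 5).toNat, by lia⟩,
    (p.1 - 2 * ((p.2 + 2 * p.1) / 5), (p.2 + 2 * p.1) / 5))
  left_inv := by
    rintro ⟨⟨r, hr⟩, n, k⟩
    simp only [Prod.mk.injEq, Fin.mk.injEq]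
    refine ⟨?_, ?_, ?_⟩ <;> lia
  right_inv := by
    rintro ⟨n, k⟩
    simp only [Prod.mk.injEq]
    constructor <;> lia

lemma tsum_mul_tsum_eq_sum_cosets {f g : ℤ → 𝕜} (hf : Summable fun n ↦ ‖f n‖)
    (hg : Summable fun n ↦ ‖g n‖) :
    (∑' n, f n) * ∑' n, g n =
      ∑ r : Fin 5, ∑' p : ℤ × ℤ, f (p.1 + 2 * p.2) * g (p.2 + (r : ℕ) - 2 * p.1) := by
  have summable_cosets := finFiveProdEquiv.summable_iff.mpr (summable_mul_of_summable_norm hf hg)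
  rw [tsum_mul_tsum_of_summable_norm hf hg, ← finFiveProdEquiv.tsum_eq]
  exact summable_cosets.tsum_prod.trans (tsum_fintype _)

lemma thetaSeries_mul_thetaSeries_eq_sum (hq : ‖q‖ < 1) (hq0 : q ≠ 0) (hx : x ≠ 0) (hy : y ≠ 0) :
    thetaSeries x q * thetaSeries y q = ∑ r ∈ range 5, q ^ chooseTwo r * y ^ r *
      (thetaSeries (q ^ (3 - 2 * r : ℤ) * x / y ^ 2) (q ^ 5) *
        thetaSeries (q ^ (1 + r : ℤ) * x ^ 2 * y) (q ^ 5)) := by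
  have hq5 : ‖q ^ 5‖ < 1 := norm_pow_lt_one hq (by decide)
  have hx_summable := summable_norm_thetaSeries hq hq0 hx
  have hy_summable := summable_norm_thetaSeries hq hq0 hy
  rw [thetaSeries, thetaSeries, tsum_mul_tsum_eq_sum_cosets hx_summable hy_summable, sum_range]
  refine sum_congr rfl fun r _ ↦ ?_
  have hx' : q ^ (3 - 2 * (r : ℕ) : ℤ) * x / y ^ 2 ≠ 0 := by positivity
  have hy' : q ^ (1 + (r : ℕ) : ℤ) * x ^ 2 * y ≠ 0 := by positivity
  have theta_mul_eq := tsum_mul_tsum_of_summable_norm (R := 𝕜)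
    (summable_norm_thetaSeries hq5 (pow_ne_zero 5 hq0) hx')
    (summable_norm_thetaSeries hq5 (pow_ne_zero 5 hq0) hy')
  rw [thetaSeries, thetaSeries, theta_mul_eq, ← tsum_mul_left]
  refine tsum_congr fun ⟨n, k⟩ ↦ ?_
  have exponent_eq : chooseTwo (n + 2 * k) + chooseTwo (k + r - 2 * n) =
      chooseTwo r + (5 * chooseTwo n + (3 - 2 * r) * n) + (5 * chooseTwo k + (1 + r) * k) := by
    refine mul_left_cancel₀ (two_ne_zero (α := ℤ)) ?_
    linear_combination two_mul_chooseTwo (n + 2 * k) + two_mul_chooseTwo (k + r - 2 * n)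
      - two_mul_chooseTwo r - 5 * two_mul_chooseTwo n - 5 * two_mul_chooseTwo k
  calc q ^ chooseTwo (n + 2 * k) * x ^ (n + 2 * k) *
        (q ^ chooseTwo (k + r - 2 * n) * y ^ (k + r - 2 * n))
    _ = q ^ (chooseTwo (n + 2 * k) + chooseTwo (k + r - 2 * n)) * x ^ (n + 2 * k) *
        y ^ (k + r - 2 * n) := by rw [zpow_add₀ hq0]; ring
    _ = _ := by
      rw [exponent_eq]
      simp only [zpow_add₀ hq0 (chooseTwo _ + _), zpow_add₀ hq0 (chooseTwo _),
        zpow_add₀ hq0 (5 * _), zpow_add₀ hx, zpow_sub₀ hy, zpow_add₀ hy, mul_zpow, div_zpow,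
        zpow_mul, zpow_natCast, zpow_ofNat]
      ring

lemma thetaSeries_mul_thetaSeries (hq : ‖q‖ < 1) (hq0 : q ≠ 0) (hx : x ≠ 0) (hy : y ≠ 0) :
    thetaSeries x q * thetaSeries y q =
      thetaSeries (q ^ 3 * x / y ^ 2) (q ^ 5) * thetaSeries (q * x ^ 2 * y) (q ^ 5)
      + y * (thetaSeries (q * x / y ^ 2) (q ^ 5) * thetaSeries (q ^ 2 * x ^ 2 * y) (q ^ 5))
      + x * (thetaSeries (q ^ 4 * x / y ^ 2) (q ^ 5) * thetaSeries (q ^ 3 * x ^ 2 * y) (q ^ 5))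
      + x * y * (thetaSeries (q ^ 2 * x / y ^ 2) (q ^ 5) * thetaSeries (q ^ 4 * x ^ 2 * y) (q ^ 5))
      + q / y * (thetaSeries (q ^ 5 * x / y ^ 2) (q ^ 5) * thetaSeries (x ^ 2 * y) (q ^ 5)) := by
  have shift (k : ℤ) : thetaSeries (q ^ k * x / y ^ 2) (q ^ 5) =
      q ^ k * x / y ^ 2 * thetaSeries (q ^ (k + 5) * x / y ^ 2) (q ^ 5) := by
    rw [thetaSeries_eq_mul (pow_ne_zero 5 hq0) (by positivity), zpow_add₀ hq0, zpow_ofNat]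
    ring_nf
  have shift_last : thetaSeries (x ^ 2 * y) (q ^ 5) =
      x ^ 2 * y * thetaSeries (q ^ 5 * x ^ 2 * y) (q ^ 5) := by
    rw [thetaSeries_eq_mul (pow_ne_zero 5 hq0) (by positivity), ← mul_assoc (q ^ 5)]
  rw [thetaSeries_mul_thetaSeries_eq_sum hq hq0 hx hy, shift_last]
  simp only [sum_range_succ, sum_range_zero, shift (3 - 2 * (2 : ℕ)), shift (3 - 2 * (3 : ℕ)),
    shift (3 - 2 * (4 : ℕ)), shift (3 - 2 * (4 : ℕ) + 5)]
  norm_num [chooseTwo, zpow_ofNat, zpow_neg]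
  field_simp

lemma thetaSeries_neg_self (hq : ‖q‖ < 1) (hq0 : q ≠ 0) : thetaSeries (-q) q = 0 := by
  rw [thetaSeries_eq_qPochhammer hq hq0 (y := -1) (by ring), neg_neg, neg_neg, qPochhammer_one,
    mul_zero]

lemma qPochhammer_neg_mul_qPochhammer_mul_qPochhammer (hq : ‖q‖ < 1) :
    qPochhammer (-q) (q ^ 2) * qPochhammer q q * qPochhammer (q ^ 4) (q ^ 4) =
      qPochhammer (q ^ 2) (q ^ 2) ^ 2 := by
  have hq2 : ‖q ^ 2‖ < 1 := norm_pow_lt_one hq two_ne_zero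
  have odd_factors := qPochhammer_mul_neg q hq2
  have even_factors := qPochhammer_eq_mul_sq (q ^ 2) hq2
  simp only [← pow_mul, ← pow_add, Nat.reduceMul, Nat.reduceAdd] at odd_factors even_factors
  rw [qPochhammer_eq_mul_sq q hq, ← pow_two q]
  linear_combination qPochhammer (q ^ 2) (q ^ 2) * qPochhammer (q ^ 4) (q ^ 4) * odd_factors -
    qPochhammer (q ^ 2) (q ^ 2) * even_factors

lemma thetaSeries_self_sq (hq : ‖q‖ < 1) (hq0 : q ≠ 0) :
    thetaSeries q (q ^ 2) = qPochhammer (q ^ 2) (q ^ 2) * qPochhammer (-q) (q ^ 2) ^ 2 := by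
  rw [thetaSeries_eq_qPochhammer (norm_pow_lt_one hq two_ne_zero) (pow_ne_zero 2 hq0)
    (pow_two q).symm]
  ring

lemma thetaSeries_mul_thetaSeries_neg_sq (hq : ‖q‖ < 1) (hq0 : q ≠ 0) :
    thetaSeries q (q ^ 4) * thetaSeries (-q ^ 2) (q ^ 4) =
      qPochhammer (q ^ 2) (q ^ 2) ^ 2 * qPochhammer (-q) (q ^ 2) := by
  have hq2 : ‖q ^ 2‖ < 1 := norm_pow_lt_one hq two_ne_zero
  have hq4 : ‖q ^ 4‖ < 1 := norm_pow_lt_one hq four_ne_zero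
  have hq4_0 : q ^ 4 ≠ 0 := pow_ne_zero 4 hq0
  rw [thetaSeries_eq_qPochhammer hq4 hq4_0 (pow_succ' q 3).symm,
    thetaSeries_eq_qPochhammer hq4 hq4_0 (x := -q ^ 2) (y := -q ^ 2) (by ring), neg_neg,
    qPochhammer_eq_mul_sq (q ^ 2) hq2, qPochhammer_eq_mul_sq (-q) hq2]
  ring_nf

lemma thetaSeries_mul_thetaSeries_cube (hq : ‖q‖ < 1) (hq0 : q ≠ 0) :
    thetaSeries q (q ^ 10) * thetaSeries (q ^ 3) (q ^ 10) * qPochhammer (-q ^ 5) (q ^ 10) =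
      qPochhammer (q ^ 10) (q ^ 10) ^ 2 * qPochhammer (-q) (q ^ 2) := by
  have hq10 : ‖q ^ 10‖ < 1 := norm_pow_lt_one hq (by decide)
  have hq10_0 : q ^ 10 ≠ 0 := pow_ne_zero 10 hq0
  rw [thetaSeries_eq_qPochhammer hq10 hq10_0 (y := q ^ 9) (by ring),
    thetaSeries_eq_qPochhammer hq10 hq10_0 (y := q ^ 7) (by ring),
    qPochhammer_eq_prod_range (-q) (norm_pow_lt_one hq two_ne_zero) (m := 5) (by decide)]
  simp only [prod_range_succ, prod_range_zero]
  ring_nf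

lemma thetaSeries_mul_add_mul_thetaSeries (hq : ‖q‖ < 1) (hq0 : q ≠ 0) :
    thetaSeries (-q ^ 2) (q ^ 5) * thetaSeries (-q ^ 8) (q ^ 20) +
        q * (thetaSeries (-q) (q ^ 5) * thetaSeries (-q ^ 4) (q ^ 20)) =
      thetaSeries q (q ^ 4) * thetaSeries (-q ^ 2) (q ^ 4) := by
  have hq5 : ‖q ^ 5‖ < 1 := norm_pow_lt_one hq (by decide)
  have hq20 : ‖q ^ 20‖ < 1 := norm_pow_lt_one hq (by decide)
  have hq5_0 : q ^ 5 ≠ 0 := pow_ne_zero 5 hq0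
  have hq20_0 : q ^ 20 ≠ 0 := pow_ne_zero 20 hq0
  have expand : thetaSeries q (q ^ 4) * thetaSeries (-q ^ 2) (q ^ 4) =
      thetaSeries (q ^ 9) (q ^ 20) * thetaSeries (-q ^ 8) (q ^ 20)
      - q ^ 2 * (thetaSeries q (q ^ 20) * thetaSeries (-q ^ 12) (q ^ 20))
      + q * (thetaSeries (q ^ 13) (q ^ 20) * thetaSeries (-q ^ 16) (q ^ 20))
      - q ^ 3 * (thetaSeries (q ^ 5) (q ^ 20) * thetaSeries (-q ^ 20) (q ^ 20))
      - q ^ 2 * (thetaSeries (q ^ 17) (q ^ 20) * thetaSeries (-q ^ 4) (q ^ 20)) := by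
    rw [thetaSeries_mul_thetaSeries (norm_pow_lt_one hq four_ne_zero) (pow_ne_zero 4 hq0) hq0
      (neg_ne_zero.mpr (pow_ne_zero 2 hq0))]
    field_simp
    ring_nf
  have dissect_neg_sq : thetaSeries (-q ^ 2) (q ^ 5) =
      thetaSeries (q ^ 9) (q ^ 20) - q ^ 2 * thetaSeries (q ^ 19) (q ^ 20) := by
    rw [thetaSeries_eq_add hq5 hq5_0 (neg_ne_zero.mpr (pow_ne_zero 2 hq0))]
    ring_nf
  have dissect_neg : thetaSeries (-q) (q ^ 5) =
      thetaSeries (q ^ 7) (q ^ 20) - q * thetaSeries (q ^ 17) (q ^ 20) := by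
    rw [thetaSeries_eq_add hq5 hq5_0 (neg_ne_zero.mpr hq0)]
    ring_nf
  rw [expand, dissect_neg_sq, dissect_neg, thetaSeries_neg_self hq20 hq20_0,
    thetaSeries_eq_of_mul_eq hq20_0 (x := q ^ 19) (y := q) (by ring),
    thetaSeries_eq_of_mul_eq hq20_0 (x := q ^ 13) (y := q ^ 7) (by ring),
    thetaSeries_eq_of_mul_eq hq20_0 (x := -q ^ 12) (y := -q ^ 8) (by ring),
    thetaSeries_eq_of_mul_eq hq20_0 (x := -q ^ 16) (y := -q ^ 4) (by ring)]
  ring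

lemma thetaSeries_self_sq_eq_add (hq : ‖q‖ < 1) (hq0 : q ≠ 0) :
    thetaSeries q (q ^ 2) ^ 2 = thetaSeries (q ^ 5) (q ^ 10) ^ 2 +
      4 * q * (thetaSeries q (q ^ 10) * thetaSeries (q ^ 3) (q ^ 10)) := by
  have hq10_0 : q ^ 10 ≠ 0 := pow_ne_zero 10 hq0
  have expand : thetaSeries q (q ^ 2) ^ 2 = thetaSeries (q ^ 5) (q ^ 10) ^ 2
      + q * (thetaSeries q (q ^ 10) * thetaSeries (q ^ 7) (q ^ 10))
      + q * (thetaSeries (q ^ 7) (q ^ 10) * thetaSeries (q ^ 9) (q ^ 10))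
      + q ^ 2 * (thetaSeries (q ^ 3) (q ^ 10) * thetaSeries (q ^ 11) (q ^ 10))
      + q * (thetaSeries (q ^ 9) (q ^ 10) * thetaSeries (q ^ 3) (q ^ 10)) := by
    rw [pow_two (thetaSeries q _), thetaSeries_mul_thetaSeries (norm_pow_lt_one hq two_ne_zero)
      (pow_ne_zero 2 hq0) hq0 hq0]
    field_simp
  have shift : q * thetaSeries (q ^ 11) (q ^ 10) = thetaSeries q (q ^ 10) := by
    rw [thetaSeries_eq_mul hq10_0 hq0, ← pow_succ]
  rw [expand, thetaSeries_eq_of_mul_eq hq10_0 (x := q ^ 9) (y := q) (by ring),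
    thetaSeries_eq_of_mul_eq hq10_0 (x := q ^ 7) (y := q ^ 3) (by ring)]
  linear_combination q * thetaSeries (q ^ 3) (q ^ 10) * shift

end Complete

end NormedField

section Watson

variable {q : ℂ}

lemma RRG_eq_inv (q : ℂ) : RRG q = (qPochhammer q (q ^ 5) * qPochhammer (q ^ 4) (q ^ 5))⁻¹ := by
  simp only [RRG, qPochhammer, one_div, ← pow_mul, ← pow_succ', ← pow_add, add_comm 4]

lemma RRH_eq_inv (q : ℂ) :
    RRH q = (qPochhammer (q ^ 2) (q ^ 5) * qPochhammer (q ^ 3) (q ^ 5))⁻¹ := by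
  simp only [RRH, qPochhammer, one_div, ← pow_mul, ← pow_add, add_comm 2, add_comm 3]

lemma rphi_eq_thetaSeries (q : ℂ) (hq0 : q ≠ 0) : rphi q = thetaSeries q (q ^ 2) := by
  refine tsum_congr fun n ↦ ?_
  rw [← zpow_natCast, ← zpow_mul, ← zpow_add₀ hq0, Nat.cast_ofNat, two_mul_chooseTwo]
  ring_nf

lemma rphi_zero : rphi 0 = 1 := by
  rw [rphi, tsum_eq_single 0 fun n hn ↦ zero_zpow _ (pow_ne_zero 2 hn)]
  simp

lemma rphi_eq_qPochhammer (hq : ‖q‖ < 1) :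
    rphi q = qPochhammer (q ^ 2) (q ^ 2) * qPochhammer (-q) (q ^ 2) ^ 2 := by
  rcases eq_or_ne q 0 with rfl | hq0
  · simp [rphi_zero, qPochhammer]
  · rw [rphi_eq_thetaSeries q hq0, thetaSeries_self_sq hq hq0]

lemma qPochhammer_self_eq_mul (hq : ‖q‖ < 1) :
    qPochhammer q q = qPochhammer q (q ^ 5) * qPochhammer (q ^ 2) (q ^ 5) *
      qPochhammer (q ^ 3) (q ^ 5) * qPochhammer (q ^ 4) (q ^ 5) * qPochhammer (q ^ 5) (q ^ 5) := by
  simp only [qPochhammer_eq_prod_range q hq (m := 5) (by decide), prod_range_succ, prod_range_zero]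
  ring_nf

lemma qPochhammer_pow_five_ne_zero (hq : ‖q‖ < 1) {n : ℕ} (hn : n ≠ 0) :
    qPochhammer (q ^ n) (q ^ 5) ≠ 0 :=
  qPochhammer_ne_zero (norm_pow_lt_one hq hn) (norm_pow_lt_one hq (by decide))

lemma RRG_mul_qPochhammer (hq : ‖q‖ < 1) (hq0 : q ≠ 0) :
    RRG q * qPochhammer q q = thetaSeries (-q ^ 2) (q ^ 5) := by
  have factor₁_ne_zero := qPochhammer_ne_zero hq (norm_pow_lt_one hq (n := 5) (by decide))
  have factor₄_ne_zero := qPochhammer_pow_five_ne_zero hq four_ne_zero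
  rw [RRG_eq_inv, qPochhammer_self_eq_mul hq, thetaSeries_eq_qPochhammer
    (norm_pow_lt_one hq (by decide)) (pow_ne_zero 5 hq0) (y := -q ^ 3) (by ring), neg_neg, neg_neg]
  field_simp

lemma RRH_mul_qPochhammer (hq : ‖q‖ < 1) (hq0 : q ≠ 0) :
    RRH q * qPochhammer q q = thetaSeries (-q) (q ^ 5) := by
  have factor₂_ne_zero := qPochhammer_pow_five_ne_zero hq two_ne_zero
  have factor₃_ne_zero := qPochhammer_pow_five_ne_zero hq three_ne_zero
  rw [RRH_eq_inv, qPochhammer_self_eq_mul hq, thetaSeries_eq_qPochhammer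
    (norm_pow_lt_one hq (by decide)) (pow_ne_zero 5 hq0) (y := -q ^ 4) (by ring), neg_neg, neg_neg]
  field_simp

lemma RRG_mul_RRH_mul_qPochhammer (hq : ‖q‖ < 1) :
    RRG q * RRH q * qPochhammer q q = qPochhammer (q ^ 5) (q ^ 5) := by
  have factor₁_ne_zero := qPochhammer_ne_zero hq (norm_pow_lt_one hq (n := 5) (by decide))
  have factor₂_ne_zero := qPochhammer_pow_five_ne_zero hq two_ne_zero
  have factor₃_ne_zero := qPochhammer_pow_five_ne_zero hq three_ne_zero
  have factor₄_ne_zero := qPochhammer_pow_five_ne_zero hq four_ne_zero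
  rw [RRG_eq_inv, RRH_eq_inv, qPochhammer_self_eq_mul hq]
  field_simp

theorem watson_add (hq : ‖q‖ < 1) :
    (RRG q * RRG (q ^ 4) + q * RRH q * RRH (q ^ 4)) * qPochhammer (q ^ 2) (q ^ 2) = rphi q := by
  rcases eq_or_ne q 0 with rfl | hq0
  · simp [RRG, rphi_zero, qPochhammer]
  have hq4 : ‖q ^ 4‖ < 1 := norm_pow_lt_one hq four_ne_zero
  have hq4_0 : q ^ 4 ≠ 0 := pow_ne_zero 4 hq0
  have theta_G₄ := RRG_mul_qPochhammer hq4 hq4_0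
  have theta_H₄ := RRH_mul_qPochhammer hq4 hq4_0
  simp only [← pow_mul, Nat.reduceMul] at theta_G₄ theta_H₄
  have theta_sum := thetaSeries_mul_add_mul_thetaSeries hq hq0
  rw [← RRG_mul_qPochhammer hq hq0, ← RRH_mul_qPochhammer hq hq0, ← theta_G₄, ← theta_H₄,
    thetaSeries_mul_thetaSeries_neg_sq hq hq0] at theta_sum
  have product_ne_zero : qPochhammer q q * qPochhammer (q ^ 4) (q ^ 4) ≠ 0 :=
    mul_ne_zero (qPochhammer_ne_zero hq hq) (qPochhammer_ne_zero hq4 hq4)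
  refine mul_right_cancel₀ product_ne_zero ?_
  rw [rphi_eq_qPochhammer hq]
  linear_combination qPochhammer (q ^ 2) (q ^ 2) * theta_sum -
    qPochhammer (q ^ 2) (q ^ 2) * qPochhammer (-q) (q ^ 2) *
      qPochhammer_neg_mul_qPochhammer_mul_qPochhammer hq

lemma RRG_mul_RRH_mul_qPochhammer_sq (hq : ‖q‖ < 1) (hq0 : q ≠ 0) :
    RRG q * RRH q * (RRG (q ^ 4) * RRH (q ^ 4)) * qPochhammer (q ^ 2) (q ^ 2) ^ 2 =
      thetaSeries q (q ^ 10) * thetaSeries (q ^ 3) (q ^ 10) := by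
  have hq4 : ‖q ^ 4‖ < 1 := norm_pow_lt_one hq four_ne_zero
  have hq5 : ‖q ^ 5‖ < 1 := norm_pow_lt_one hq (by decide)
  have hq10 : ‖q ^ 10‖ < 1 := norm_pow_lt_one hq (by decide)
  have product_eq := qPochhammer_neg_mul_qPochhammer_mul_qPochhammer hq
  have product_eq₅ := qPochhammer_neg_mul_qPochhammer_mul_qPochhammer hq5
  have GH_eq := RRG_mul_RRH_mul_qPochhammer hq
  have GH_eq₄ := RRG_mul_RRH_mul_qPochhammer hq4
  have theta_eq := thetaSeries_mul_thetaSeries_cube hq hq0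
  simp only [← pow_mul, Nat.reduceMul] at product_eq₅ GH_eq₄
  have product_ne_zero : qPochhammer q q * qPochhammer (q ^ 4) (q ^ 4) *
      qPochhammer (-q ^ 5) (q ^ 10) ≠ 0 := by
    refine mul_ne_zero (mul_ne_zero (qPochhammer_ne_zero hq hq) (qPochhammer_ne_zero hq4 hq4))
      (qPochhammer_ne_zero ?_ hq10)
    rwa [norm_neg]
  refine mul_right_cancel₀ product_ne_zero ?_
  calc _ = RRG q * RRH q * qPochhammer q q *
        (RRG (q ^ 4) * RRH (q ^ 4) * qPochhammer (q ^ 4) (q ^ 4)) *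
        qPochhammer (-q ^ 5) (q ^ 10) * qPochhammer (q ^ 2) (q ^ 2) ^ 2 := by ring
    _ = qPochhammer (-q ^ 5) (q ^ 10) * qPochhammer (q ^ 5) (q ^ 5) *
        qPochhammer (q ^ 20) (q ^ 20) * qPochhammer (q ^ 2) (q ^ 2) ^ 2 := by
      rw [GH_eq, GH_eq₄]; ring
    _ = qPochhammer (q ^ 10) (q ^ 10) ^ 2 * (qPochhammer (-q) (q ^ 2) * qPochhammer q q *
        qPochhammer (q ^ 4) (q ^ 4)) := by rw [product_eq₅, product_eq]
    _ = _ := by linear_combination -(qPochhammer q q * qPochhammer (q ^ 4) (q ^ 4)) * theta_eq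

lemma watson_sub_sq (hq : ‖q‖ < 1) :
    ((RRG q * RRG (q ^ 4) - q * RRH q * RRH (q ^ 4)) * qPochhammer (q ^ 2) (q ^ 2)) ^ 2 =
      rphi (q ^ 5) ^ 2 := by
  rcases eq_or_ne q 0 with rfl | hq0
  · simp [RRG, rphi_zero, qPochhammer]
  have theta_sq := thetaSeries_self_sq_eq_add hq hq0
  rw [← RRG_mul_RRH_mul_qPochhammer_sq hq hq0, ← rphi_eq_thetaSeries q hq0,
    ← watson_add hq] at theta_sq
  rw [rphi_eq_thetaSeries _ (pow_ne_zero 5 hq0), ← pow_mul]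
  linear_combination theta_sq

lemma continuousOn_qPochhammer_pow {m n : ℕ} (hn : n ≠ 0) :
    ContinuousOn (fun q : ℂ ↦ qPochhammer (q ^ m) (q ^ n)) (Metric.ball 0 1) :=
  continuousOn_qPochhammer.comp (f := fun q : ℂ ↦ (q ^ m, q ^ n)) (by fun_prop)
    fun q hq ↦ norm_pow_lt_one (mem_ball_zero_iff.mp hq) hn

lemma continuousOn_RRG : ContinuousOn RRG (Metric.ball 0 1) := by
  simp only [funext RRG_eq_inv]
  have continuousOn_first :
      ContinuousOn (fun q : ℂ ↦ qPochhammer q (q ^ 5)) (Metric.ball 0 1) := by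
    simpa only [pow_one] using continuousOn_qPochhammer_pow (m := 1) (n := 5) (by decide)
  refine ContinuousOn.inv₀ (continuousOn_first.mul
    (continuousOn_qPochhammer_pow (by decide))) fun q hq ↦ ?_
  rw [mem_ball_zero_iff] at hq
  exact mul_ne_zero (qPochhammer_ne_zero hq (norm_pow_lt_one hq (by decide)))
    (qPochhammer_pow_five_ne_zero hq four_ne_zero)

lemma continuousOn_RRH : ContinuousOn RRH (Metric.ball 0 1) := by
  simp only [funext RRH_eq_inv]
  refine ContinuousOn.inv₀ ((continuousOn_qPochhammer_pow (by decide)).mul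
    (continuousOn_qPochhammer_pow (by decide))) fun q hq ↦ ?_
  rw [mem_ball_zero_iff] at hq
  exact mul_ne_zero (qPochhammer_pow_five_ne_zero hq two_ne_zero)
    (qPochhammer_pow_five_ne_zero hq three_ne_zero)

lemma continuousOn_rphi : ContinuousOn rphi (Metric.ball 0 1) := by
  refine ContinuousOn.congr ?_ fun q hq ↦ rphi_eq_qPochhammer (mem_ball_zero_iff.mp hq)
  have continuousOn_neg : ContinuousOn (fun q : ℂ ↦ qPochhammer (-q) (q ^ 2)) (Metric.ball 0 1) :=
    continuousOn_qPochhammer.comp (f := fun q : ℂ ↦ (-q, q ^ 2)) (by fun_prop)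
      fun q hq ↦ norm_pow_lt_one (mem_ball_zero_iff.mp hq) two_ne_zero
  exact (continuousOn_qPochhammer_pow two_ne_zero).mul (continuousOn_neg.pow 2)

lemma rphi_ne_zero (hq : ‖q‖ < 1) : rphi q ≠ 0 := by
  have hq2 : ‖q ^ 2‖ < 1 := norm_pow_lt_one hq two_ne_zero
  rw [rphi_eq_qPochhammer hq]
  refine mul_ne_zero (qPochhammer_ne_zero hq2 hq2) (pow_ne_zero 2 (qPochhammer_ne_zero ?_ hq2))
  rwa [norm_neg]

theorem watson_sub (hq : ‖q‖ < 1) :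
    (RRG q * RRG (q ^ 4) - q * RRH q * RRH (q ^ 4)) * qPochhammer (q ^ 2) (q ^ 2) =
      rphi (q ^ 5) := by
  have mapsTo_pow {n : ℕ} (hn : n ≠ 0) :
      Set.MapsTo (fun z : ℂ ↦ z ^ n) (Metric.ball 0 1) (Metric.ball 0 1) := fun z hz ↦
    mem_ball_zero_iff.mpr (norm_pow_lt_one (mem_ball_zero_iff.mp hz) hn)
  have continuousOn_RRG₄ := continuousOn_RRG.comp (by fun_prop) (mapsTo_pow four_ne_zero)
  have continuousOn_RRH₄ := continuousOn_RRH.comp (by fun_prop) (mapsTo_pow four_ne_zero)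
  have continuousOn_lhs := ((continuousOn_RRG.mul continuousOn_RRG₄).sub
    ((continuousOn_id.mul continuousOn_RRH).mul continuousOn_RRH₄)).mul
      (continuousOn_qPochhammer_pow (m := 2) two_ne_zero)
  have continuousOn_rhs := continuousOn_rphi.comp (by fun_prop) (mapsTo_pow (n := 5) (by decide))
  refine (convex_ball (0 : ℂ) 1).isPreconnected.eq_of_sq_eq continuousOn_lhs continuousOn_rhs
    (fun z hz ↦ watson_sub_sq (mem_ball_zero_iff.mp hz))
    (fun {z} hz ↦ rphi_ne_zero (mem_ball_zero_iff.mp (mapsTo_pow (by decide) hz)))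
    (Metric.mem_ball_self one_pos) ?_ (mem_ball_zero_iff.mpr hq)
  simp [RRG, qPochhammer, rphi_zero]

end Watson

/-- Watson's identities:
`G(q)G(q⁴) + q H(q)H(q⁴) = φ(q)/(q²;q²)_∞` and
`G(q)G(q⁴) − q H(q)H(q⁴) = φ(q⁵)/(q²;q²)_∞`. -/
theorem watson_GG_HH (q : ℂ) (hq : ‖q‖ < 1) :
    RRG q * RRG (q ^ 4) + q * RRH q * RRH (q ^ 4) =
        rphi q / ∏' n : ℕ, (1 - q ^ (2 * n + 2)) ∧
      RRG q * RRG (q ^ 4) - q * RRH q * RRH (q ^ 4) =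
        rphi (q ^ 5) / ∏' n : ℕ, (1 - q ^ (2 * n + 2)) := by
  have product_eq : ∏' n : ℕ, (1 - q ^ (2 * n + 2)) = qPochhammer (q ^ 2) (q ^ 2) :=
    tprod_congr fun n ↦ by ring
  have hq2 : ‖q ^ 2‖ < 1 := norm_pow_lt_one hq two_ne_zero
  have product_ne_zero : qPochhammer (q ^ 2) (q ^ 2) ≠ 0 := qPochhammer_ne_zero hq2 hq2
  rw [product_eq, eq_div_iff product_ne_zero, eq_div_iff product_ne_zero]
  exact ⟨watson_add hq, watson_sub hq⟩
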